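/- For every task graph G and present bias set B, the price of uncertainty r(G,B)/sup{r(G,{β}) : β ∈ B} is at most 2; equivalently, there exists a cost configuration c̃ such that G with extra costs c̃ is motivating for every β ∈ B with reward 2α/b, where b = min B and α/b = min over s–t paths P of max over edges e ∈ P of d_b(e)/b is a lower bound on r(G,{b}). -/

import Mathlib

/-- Kleinberg–Oren task graph: a finite directed graph on `Fin n` with
non-negative edge costs and terminal nodes `s` and `t`. -/
structure TaskGraph (n : ℕ) where
  E : Finset (Fin n × Fin n)
  c : Fin n × Fin n → ℝ
  c_nonneg : ∀ e, 0 ≤ c e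
  s : Fin n
  t : Fin n

namespace TaskGraph

variable {n : ℕ}

/-- `P` is a path in `G` along edges of `G` ending at the target `t`. -/
def IsPath (G : TaskGraph n) : List (Fin n) → Prop
  | [] => False
  | [v] => v = G.t
  | v :: w :: rest => (v, w) ∈ G.E ∧ IsPath G (w :: rest)

/-- Total cost of a path given as a list of nodes. -/
def pathCost (G : TaskGraph n) : List (Fin n) → ℝ
  | [] => 0
  | [_] => 0
  | v :: w :: rest => G.c (v, w) + pathCost G (w :: rest)

/-- `d(v)`: cost of a cheapest path from `v` to `t`. -/
noncomputable def dist (G : TaskGraph n) (v : Fin n) : ℝ :=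
  sInf (G.pathCost '' {P | G.IsPath P ∧ P.head? = some v})

/-- `d_β(v,w) = c(v,w) + β·d(w)`: perceived cost of edge `(v,w)` for present bias `β`. -/
noncomputable def pc (G : TaskGraph n) (β : ℝ) (e : Fin n × Fin n) : ℝ :=
  G.c e + β * G.dist e.2

/-- One step of the agent with present bias `β`: traverse an edge minimizing perceived cost. -/
def Step (G : TaskGraph n) (β : ℝ) (v w : Fin n) : Prop :=
  (v, w) ∈ G.E ∧ ∀ w', (v, w') ∈ G.E → G.pc β (v, w) ≤ G.pc β (v, w')

/-- Nodes reachable by the agent with present bias `β` starting from `s`. -/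
def Reachable (G : TaskGraph n) (β : ℝ) (v : Fin n) : Prop :=
  Relation.ReflTransGen (G.Step β) G.s v

/-- `G` is motivating for present bias `β` and reward `r`: on every greedy walk the agent
never reaches a node `v ≠ t` where the minimum perceived cost exceeds `β·r`. -/
def Motivating (G : TaskGraph n) (β r : ℝ) : Prop :=
  ∀ v, G.Reachable β v → v ≠ G.t → ∃ w, G.Step β v w ∧ G.pc β (v, w) ≤ β * r

/-- One step of an agent whose present bias varies node by node according to `βc`. -/
def StepV (G : TaskGraph n) (βc : Fin n → ℝ) (v w : Fin n) : Prop :=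
  (v, w) ∈ G.E ∧ ∀ w', (v, w') ∈ G.E → G.pc (βc v) (v, w) ≤ G.pc (βc v) (v, w')

def ReachableV (G : TaskGraph n) (βc : Fin n → ℝ) (v : Fin n) : Prop :=
  Relation.ReflTransGen (G.StepV βc) G.s v

/-- `G` is motivating for the present bias configuration `βc` and reward `r`. -/
def MotivatingV (G : TaskGraph n) (βc : Fin n → ℝ) (r : ℝ) : Prop :=
  ∀ v, G.ReachableV βc v → v ≠ G.t → ∃ w, G.StepV βc v w ∧ G.pc (βc v) (v, w) ≤ βc v * r

/-- The task graph obtained by adding the extra costs of a cost configuration `ct`. -/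
def withCost (G : TaskGraph n) (ct : Fin n × Fin n → ℝ) (h : ∀ e, 0 ≤ ct e) : TaskGraph n where
  E := G.E
  c := fun e => G.c e + ct e
  c_nonneg := fun e => add_nonneg (G.c_nonneg e) (h e)
  s := G.s
  t := G.t

/-- `r(G,B)`: infimum over rewards admitting a cost configuration motivating for all `β ∈ B`. -/
noncomputable def rewardInf (G : TaskGraph n) (B : Set ℝ) : ℝ :=
  sInf {r : ℝ | ∃ ct : Fin n × Fin n → ℝ, ∃ h : ∀ e, 0 ≤ ct e,
    ∀ β ∈ B, (G.withCost ct h).Motivating β r}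

/-- `r(G,B^V)`: infimum over rewards admitting a cost configuration motivating for all
present bias configurations with values in `B`. -/
noncomputable def rewardInfV (G : TaskGraph n) (B : Set ℝ) : ℝ :=
  sInf {r : ℝ | ∃ ct : Fin n × Fin n → ℝ, ∃ h : ∀ e, 0 ≤ ct e,
    ∀ βc : Fin n → ℝ, (∀ v, βc v ∈ B) → (G.withCost ct h).MotivatingV βc r}

end TaskGraph

/-! If `G` can be made motivating for `β` and `r`, then the walk of the agent is a route `(S, σ)`
from `s` to `t` along which perceived costs in `G` itself are at most `β·r`. A route that is good
for `β` is good for every larger bias, and there are only finitely many routes, so a single route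
serves all of `B`.

Given such a route, fix a tree of cheapest paths to `t`. Following `σ` on `S` and the tree off `S`
is kept free of extra cost. A tree edge that leaves the route is charged, on entry, the length of
the whole detour until the tree path meets the route again; all remaining edges are blocked.
Each stretch of a tree path is charged at most once, so distances at most double, which makes `σ`
affordable with reward `2r`. And an agent willing to pay for a detour up front is motivated at
every node of it, because what it has left to pay only decreases. -/

theorem exists_forall_of_monotone {ι α : Type*} [LinearOrder ι] [Nonempty ι] [Finite α]
    {p : ι → α → Prop} (hp : ∀ a, Monotone (p · a)) (h : ∀ i, ∃ a, p i a) :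
    ∃ a, ∀ i, p i a := by
  have : Nonempty α := (h (Classical.arbitrary ι)).nonempty
  by_contra! hneg
  choose i hi using hneg
  obtain ⟨a₀, hmin⟩ := Finite.exists_min i
  obtain ⟨a, ha⟩ := h (i a₀)
  exact hi a (hp a (hmin a) ha)

namespace TaskGraph

variable {n : ℕ} {G : TaskGraph n} {v w : Fin n} {P : List (Fin n)}

section Paths

theorem IsPath.exists_eq_cons_cons (hP : G.IsPath P) (hhead : P.head? = some v)
    (hvt : v ≠ G.t) : ∃ w Q, P = v :: w :: Q ∧ (v, w) ∈ G.E ∧ G.IsPath (w :: Q) := by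
  match P, hP, hhead with
  | [_], hP, rfl => exact absurd hP hvt
  | _ :: w :: Q, hP, rfl => exact ⟨w, Q, rfl, hP⟩

theorem IsPath.exists_isPath_of_mem (hP : G.IsPath P) (hv : v ∈ P) :
    ∃ Q, G.IsPath Q ∧ Q.head? = some v := by
  induction P with
  | nil => exact hP.elim
  | cons u Q ih =>
    rcases List.mem_cons.1 hv with rfl | hv
    · exact ⟨_, hP, rfl⟩
    · cases Q with
      | nil => cases hv
      | cons w Q => exact ih hP.2 hv

theorem pathCost_nonneg (G : TaskGraph n) : ∀ P, 0 ≤ G.pathCost P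
  | [] => le_rfl
  | [_] => le_rfl
  | _ :: w :: Q => add_nonneg (G.c_nonneg _) (pathCost_nonneg G (w :: Q))

/-- Every node has a path to the target. -/
def IsCoaccessible (G : TaskGraph n) : Prop :=
  ∀ v, ∃ P, G.IsPath P ∧ P.head? = some v

theorem IsCoaccessible.exists_edge (hG : G.IsCoaccessible) (hvt : v ≠ G.t) :
    ∃ w, (v, w) ∈ G.E := by
  obtain ⟨P, hP, hhead⟩ := hG v
  obtain ⟨w, _, _, hE, _⟩ := hP.exists_eq_cons_cons hhead hvt
  exact ⟨w, hE⟩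

theorem exists_edge_forall_le (f : Fin n → ℝ) (h : (v, w) ∈ G.E) :
    ∃ u, (v, u) ∈ G.E ∧ ∀ u', (v, u') ∈ G.E → f u ≤ f u' :=
  Set.exists_min_image {u | (v, u) ∈ G.E} f (Set.toFinite _) ⟨w, h⟩

end Paths

section Dist

theorem dist_nonneg (G : TaskGraph n) (v : Fin n) : 0 ≤ G.dist v :=
  Real.sInf_nonneg (Set.forall_mem_image.2 fun P _ => G.pathCost_nonneg P)

theorem dist_le_pathCost (hP : G.IsPath P) (hhead : P.head? = some v) :
    G.dist v ≤ G.pathCost P :=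
  csInf_le ⟨0, Set.forall_mem_image.2 fun Q _ => G.pathCost_nonneg Q⟩ ⟨P, ⟨hP, hhead⟩, rfl⟩

theorem IsCoaccessible.le_dist (hG : G.IsCoaccessible) {x : ℝ}
    (h : ∀ P, G.IsPath P → P.head? = some v → x ≤ G.pathCost P) : x ≤ G.dist v :=
  le_csInf (Set.Nonempty.image _ (hG v)) (Set.forall_mem_image.2 fun P hP => h P hP.1 hP.2)

theorem dist_target (G : TaskGraph n) : G.dist G.t = 0 :=
  (dist_le_pathCost (P := [G.t]) rfl rfl).antisymm (G.dist_nonneg G.t)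

theorem IsCoaccessible.dist_le_add (hG : G.IsCoaccessible) (h : (v, w) ∈ G.E) :
    G.dist v ≤ G.c (v, w) + G.dist w := by
  suffices G.dist v - G.c (v, w) ≤ G.dist w by linarith
  refine hG.le_dist fun P hP hhead => ?_
  match P, hP, hhead with
  | _ :: Q, hP, rfl =>
    have : G.dist v ≤ G.c (v, w) + G.pathCost (w :: Q) :=
      dist_le_pathCost (P := v :: w :: Q) ⟨h, hP⟩ rfl
    linarith

theorem IsCoaccessible.exists_add_dist_eq (hG : G.IsCoaccessible) (hvt : v ≠ G.t) :
    ∃ w, (v, w) ∈ G.E ∧ G.c (v, w) + G.dist w = G.dist v := by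
  obtain ⟨w₀, hw₀⟩ := hG.exists_edge hvt
  obtain ⟨w, hw, hmin⟩ := exists_edge_forall_le (fun u => G.c (v, u) + G.dist u) hw₀
  refine ⟨w, hw, (hG.le_dist fun P hP hhead => ?_).antisymm (hG.dist_le_add hw)⟩
  obtain ⟨u, Q, rfl, hu, hQ⟩ := hP.exists_eq_cons_cons hhead hvt
  calc G.c (v, w) + G.dist w ≤ G.c (v, u) + G.dist u := hmin u hu
    _ ≤ G.c (v, u) + G.pathCost (u :: Q) := by gcongr; exact dist_le_pathCost hQ rfl

end Dist

section WithCost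

variable {ct : Fin n × Fin n → ℝ} {hct : ∀ e, 0 ≤ ct e}

theorem isPath_withCost : ∀ {P}, (G.withCost ct hct).IsPath P ↔ G.IsPath P
  | [] => Iff.rfl
  | [_] => Iff.rfl
  | _ :: w :: Q => and_congr Iff.rfl (isPath_withCost (P := w :: Q))

theorem pathCost_le_pathCost_withCost : ∀ P, G.pathCost P ≤ (G.withCost ct hct).pathCost P
  | [] => le_rfl
  | [_] => le_rfl
  | v :: w :: Q =>
    add_le_add (le_add_of_nonneg_right (hct (v, w))) (pathCost_le_pathCost_withCost (w :: Q))

theorem IsCoaccessible.withCost (hG : G.IsCoaccessible) :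
    (G.withCost ct hct).IsCoaccessible :=
  fun v => (hG v).imp fun _ hP => ⟨isPath_withCost.2 hP.1, hP.2⟩

theorem IsCoaccessible.dist_le_dist_withCost (hG : G.IsCoaccessible) :
    G.dist v ≤ (G.withCost ct hct).dist v :=
  hG.withCost.le_dist fun P hP hhead =>
    (dist_le_pathCost (isPath_withCost.1 hP) hhead).trans (pathCost_le_pathCost_withCost P)

theorem IsCoaccessible.pc_le_pc_withCost (hG : G.IsCoaccessible) {β : ℝ} (hβ : 0 ≤ β)
    (e : Fin n × Fin n) : G.pc β e ≤ (G.withCost ct hct).pc β e :=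
  add_le_add (le_add_of_nonneg_right (hct e))
    (mul_le_mul_of_nonneg_left hG.dist_le_dist_withCost hβ)

theorem pc_withCost_of_eq_zero {β : ℝ} {e : Fin n × Fin n} (h : ct e = 0) :
    (G.withCost ct hct).pc β e = G.c e + β * (G.withCost ct hct).dist e.2 := by
  simp only [pc, withCost, h, add_zero]

end WithCost

section Acyclic

/-- Acyclicity of the finite task graph, phrased as well-foundedness so that it supports induction
and recursion starting from the nodes without outgoing edges. -/
def IsAcyclic (G : TaskGraph n) : Prop :=
  WellFounded fun w v => (v, w) ∈ G.E

theorem isAcyclic_of_rank {rank : Fin n → ℕ} (hrank : ∀ e ∈ G.E, rank e.1 < rank e.2) :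
    G.IsAcyclic :=
  Subrelation.wf (fun h => hrank _ h)
    (Set.wellFoundedOn_range.1 ((Set.finite_range rank).wellFoundedOn (r := (· > ·))))

theorem IsPath.reflTransGen (hP : G.IsPath P) (hhead : P.head? = some v) :
    Relation.ReflTransGen (fun w v => (v, w) ∈ G.E) G.t v := by
  induction P generalizing v with
  | nil => exact hP.elim
  | cons u Q ih =>
    obtain rfl : u = v := Option.some.inj hhead
    cases Q with
    | nil => exact hP ▸ .refl
    | cons w Q => exact (ih hP.2 rfl).tail hP.1

theorem IsCoaccessible.target_edge_notMem (hG : G.IsCoaccessible) (hac : G.IsAcyclic)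
    (w : Fin n) : (G.t, w) ∉ G.E := fun h =>
  have ⟨_, hP, hhead⟩ := hG w
  (WellFounded.transGen hac).irrefl.irrefl G.t (.tail' (hP.reflTransGen hhead) h)

end Acyclic

section Frugal

variable {β β' r r' : ℝ} {S : Set (Fin n)} {σ : Fin n → Fin n}

/-- The pair `(S, σ)` encodes a path all of whose edges `e` satisfy `d_β(e) ≤ β·r`: start at `s`
and follow `σ` inside `S` until reaching `t`. -/
def IsFrugal (G : TaskGraph n) (β r : ℝ) (S : Set (Fin n)) (σ : Fin n → Fin n) : Prop :=
  G.s ∈ S ∧ ∀ v ∈ S, v ≠ G.t → σ v ∈ S ∧ (v, σ v) ∈ G.E ∧ G.pc β (v, σ v) ≤ β * r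

theorem IsFrugal.mono_reward (h : G.IsFrugal β r S σ) (hβ : 0 ≤ β) (hr : r ≤ r') :
    G.IsFrugal β r' S σ :=
  ⟨h.1, fun v hv hvt =>
    have ⟨hmem, hE, hpc⟩ := h.2 v hv hvt
    ⟨hmem, hE, hpc.trans (mul_le_mul_of_nonneg_left hr hβ)⟩⟩

theorem pc_le_mul_of_le (hβ : 0 < β) (hβ' : β ≤ β') {e : Fin n × Fin n}
    (h : G.pc β e ≤ β * r) : G.pc β' e ≤ β' * r := by
  unfold pc at h ⊢
  have hdist : G.dist e.2 ≤ r := by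
    refine le_of_mul_le_mul_left ?_ hβ
    linarith [G.c_nonneg e]
  have := mul_le_mul_of_nonneg_right hβ' (sub_nonneg.2 hdist)
  linarith

theorem IsFrugal.mono_bias (h : G.IsFrugal β r S σ) (hβ : 0 < β) (hβ' : β ≤ β') :
    G.IsFrugal β' r S σ :=
  ⟨h.1, fun v hv hvt =>
    have ⟨hmem, hE, hpc⟩ := h.2 v hv hvt
    ⟨hmem, hE, pc_le_mul_of_le hβ hβ' hpc⟩⟩

theorem IsCoaccessible.exists_isFrugal (hG : G.IsCoaccessible) (hβ : 0 < β) :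
    ∃ r S σ, G.IsFrugal β r S σ := by
  choose! σ hσ using fun v => hG.exists_edge (v := v)
  obtain ⟨M, hM⟩ := (Set.finite_range (G.pc β)).bddAbove
  refine ⟨M / β, Set.univ, σ, trivial, fun v _ hvt => ⟨trivial, hσ v hvt, ?_⟩⟩
  rw [mul_div_cancel₀ M hβ.ne']
  exact hM (Set.mem_range_self _)

theorem IsCoaccessible.exists_isFrugal_of_motivating (hG : G.IsCoaccessible)
    {ct : Fin n × Fin n → ℝ} {hct : ∀ e, 0 ≤ ct e} (hβ : 0 ≤ β)
    (h : (G.withCost ct hct).Motivating β r) : ∃ S σ, G.IsFrugal β r S σ := by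
  choose! σ hstep hpc using h
  exact ⟨{v | (G.withCost ct hct).Reachable β v}, σ, .refl, fun v hv hvt =>
    ⟨.tail hv (hstep v hv hvt), (hstep v hv hvt).1,
      (hG.pc_le_pc_withCost hβ _).trans (hpc v hv hvt)⟩⟩

end Frugal

section Detours

variable {S : Set (Fin n)}

/-- A tree of cheapest paths to `t`, given by the successor map `next`, together with the first
node `exit v` of `S ∪ {t}` on the tree path from `v`. -/
structure ReturnTree (G : TaskGraph n) (S : Set (Fin n)) where
  next : Fin n → Fin n
  exit : Fin n → Fin n
  next_edge : ∀ v, v ≠ G.t → (v, next v) ∈ G.E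
  add_dist_next : ∀ v, v ≠ G.t → G.c (v, next v) + G.dist (next v) = G.dist v
  exit_target : exit G.t = G.t
  exit_of_mem : ∀ v ∈ S, exit v = v
  exit_of_notMem : ∀ v ∉ S, v ≠ G.t → exit v = exit (next v)

theorem IsCoaccessible.nonempty_returnTree (hG : G.IsCoaccessible) (hac : G.IsAcyclic)
    (S : Set (Fin n)) : Nonempty (G.ReturnTree S) := by
  choose! next hedge hdist using fun v => hG.exists_add_dist_eq (v := v)
  classical
  obtain ⟨exit, hexit⟩ : ∃ exit : Fin n → Fin n,
      ∀ v, exit v = if v ∈ S ∨ v = G.t then v else exit (next v) := by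
    refine ⟨hac.fix fun v exit =>
      if h : v ∈ S ∨ v = G.t then v else exit (next v) (hedge v (not_or.1 h).2), fun v => ?_⟩
    rw [hac.fix_eq, dite_eq_ite]
  exact ⟨⟨next, exit, hedge, hdist, by rw [hexit, if_pos (.inr rfl)],
    fun v hv => by rw [hexit, if_pos (.inl hv)],
    fun v hv hvt => by rw [hexit, if_neg (not_or.2 ⟨hv, hvt⟩)]⟩⟩

namespace ReturnTree

variable {σ : Fin n → Fin n} {M β r : ℝ}

theorem dist_next_le (T : G.ReturnTree S) (hvt : v ≠ G.t) : G.dist (T.next v) ≤ G.dist v := by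
  linarith [T.add_dist_next v hvt, G.c_nonneg (v, T.next v)]

theorem dist_exit_le (T : G.ReturnTree S) (hac : G.IsAcyclic) (v : Fin n) :
    G.dist (T.exit v) ≤ G.dist v := by
  induction v using hac.induction with
  | _ v ih =>
    by_cases hvt : v = G.t
    · rw [hvt, T.exit_target]
    by_cases hvS : v ∈ S
    · rw [T.exit_of_mem v hvS]
    · rw [T.exit_of_notMem v hvS hvt]
      exact (ih _ (T.next_edge v hvt)).trans (T.dist_next_le hvt)

open scoped Classical in
/-- The extra costs: the preferred edges (`σ` on `S`, the tree off `S`) are free, a tree edge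
leaving `S` is charged in advance for its whole detour back to `S ∪ {t}`, and every other edge is
blocked by the prohibitive cost `M`. -/
noncomputable def toll (T : G.ReturnTree S) (σ : Fin n → Fin n) (M : ℝ)
    (e : Fin n × Fin n) : ℝ :=
  if e.2 = (if e.1 ∈ S then σ e.1 else T.next e.1) then 0
  else if e.2 = T.next e.1 then G.c e + (G.dist e.2 - G.dist (T.exit e.2))
  else M

theorem toll_nonneg (T : G.ReturnTree S) (hac : G.IsAcyclic) (σ : Fin n → Fin n)
    (hM : 0 ≤ M) (e : Fin n × Fin n) : 0 ≤ T.toll σ M e := by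
  have hdetour : 0 ≤ G.c e + (G.dist e.2 - G.dist (T.exit e.2)) :=
    add_nonneg (G.c_nonneg e) (sub_nonneg.2 (T.dist_exit_le hac e.2))
  unfold toll
  split_ifs <;> first | exact le_rfl | assumption

variable (T : G.ReturnTree S) {hct : ∀ e, 0 ≤ T.toll σ M e}

theorem toll_of_mem (hv : v ∈ S) : T.toll σ M (v, σ v) = 0 := by
  simp [toll, hv]

theorem toll_of_notMem (hv : v ∉ S) : T.toll σ M (v, T.next v) = 0 := by
  simp [toll, hv]

theorem toll_next_of_mem (hv : v ∈ S) (hne : T.next v ≠ σ v) :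
    T.toll σ M (v, T.next v) =
      G.c (v, T.next v) + (G.dist (T.next v) - G.dist (T.exit (T.next v))) := by
  simp [toll, hv, hne]

theorem toll_of_ne (hσ : v ∈ S → w ≠ σ v) (hne : w ≠ T.next v) :
    T.toll σ M (v, w) = M := by
  by_cases hv : v ∈ S
  · simp [toll, hv, hσ hv, hne]
  · simp [toll, hv, hne]

theorem dist_withCost_le (hG : G.IsCoaccessible) (hac : G.IsAcyclic) (v : Fin n) :
    (G.withCost _ hct).dist v ≤ G.dist v + G.dist (T.exit v) := by
  set H := G.withCost _ hct
  induction v using hac.induction with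
  | _ v ih =>
    by_cases hvt : v = G.t
    · rw [hvt, T.exit_target, G.dist_target, add_zero]
      exact H.dist_target.le
    have hnext : H.dist v ≤ G.c (v, T.next v) + T.toll σ M (v, T.next v) + H.dist (T.next v) :=
      hG.withCost.dist_le_add (T.next_edge v hvt)
    have htight := T.add_dist_next v hvt
    have hih := ih _ (T.next_edge v hvt)
    by_cases hvS : v ∈ S
    · rw [T.exit_of_mem v hvS]
      by_cases hne : T.next v = σ v
      · rw [hne, T.toll_of_mem hvS, ← hne] at hnext
        linarith [T.dist_exit_le hac (T.next v), G.c_nonneg (v, T.next v)]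
      · rw [T.toll_next_of_mem hvS hne] at hnext
        linarith
    · rw [T.toll_of_notMem hvS] at hnext
      rw [T.exit_of_notMem v hvS hvt]
      linarith

theorem dist_withCost_le_two_mul (hG : G.IsCoaccessible) (hac : G.IsAcyclic) (v : Fin n) :
    (G.withCost _ hct).dist v ≤ 2 * G.dist v := by
  linarith [T.dist_withCost_le hG hac (hct := hct) v, T.dist_exit_le hac v]

theorem le_pc_withCost_of_ne (hβ : 0 ≤ β) (hσ : v ∈ S → w ≠ σ v) (hne : w ≠ T.next v) :
    M ≤ (G.withCost _ hct).pc β (v, w) :=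
  calc M ≤ G.c (v, w) + M := le_add_of_nonneg_left (G.c_nonneg _)
    _ = (G.withCost _ hct).c (v, w) :=
      congrArg (G.c (v, w) + ·) (T.toll_of_ne hσ hne).symm
    _ ≤ _ := le_add_of_nonneg_right (mul_nonneg hβ (dist_nonneg _ _))

theorem dist_withCost_next_le (hG : G.IsCoaccessible) (hac : G.IsAcyclic)
    (hM : 2 * G.dist v < M) (hvS : v ∉ S) (hvt : v ≠ G.t) :
    (G.withCost _ hct).dist (T.next v) ≤ (G.withCost _ hct).dist v := by
  set H := G.withCost _ hct
  obtain ⟨w, -, hdist⟩ := (hG.withCost : H.IsCoaccessible).exists_add_dist_eq hvt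
  by_cases hne : w = T.next v
  · subst hne
    linarith [H.c_nonneg (v, T.next v)]
  · have hblocked : M ≤ H.c (v, w) + 1 * H.dist w :=
      T.le_pc_withCost_of_ne zero_le_one (absurd · hvS) hne
    linarith [T.dist_withCost_le_two_mul hG hac (hct := hct) v]

/-- The invariant of the agent's walk in the modified task graph `H`: it is either in `S` or on a
detour, and then completing the detour with full present weight is affordable for the budget
`β·r`. -/
def OnTrack (T : G.ReturnTree S) (H : TaskGraph n) (β r : ℝ) (v : Fin n) : Prop :=
  v ∈ S ∨ G.dist v - G.dist (T.exit v) + β * H.dist v ≤ β * r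

variable {T}

theorem OnTrack.exists_edge (hG : G.IsCoaccessible) (hac : G.IsAcyclic)
    (hM : 2 * G.dist v < M) (hfrugal : G.IsFrugal β r S σ) (hβ : 0 ≤ β) (hvt : v ≠ G.t)
    (hv : T.OnTrack (G.withCost _ hct) β (2 * r) v) :
    ∃ w, (v, w) ∈ G.E ∧ (G.withCost _ hct).pc β (v, w) ≤ β * (2 * r) := by
  set H := G.withCost _ hct
  by_cases hvS : v ∈ S
  · obtain ⟨-, hE, hpc⟩ := hfrugal.2 v hvS hvt
    refine ⟨σ v, hE, ?_⟩
    calc H.pc β (v, σ v) = G.c (v, σ v) + β * H.dist (σ v) :=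
          pc_withCost_of_eq_zero (T.toll_of_mem hvS)
      _ ≤ 2 * G.c (v, σ v) + β * (2 * G.dist (σ v)) := by
          gcongr
          · linarith [G.c_nonneg (v, σ v)]
          · exact T.dist_withCost_le_two_mul hG hac _
      _ = 2 * G.pc β (v, σ v) := by unfold pc; ring
      _ ≤ β * (2 * r) := by linarith
  · refine ⟨T.next v, T.next_edge v hvt, ?_⟩
    have hexit : G.dist (T.exit v) ≤ G.dist (T.next v) := by
      rw [T.exit_of_notMem v hvS hvt]
      exact T.dist_exit_le hac _
    calc H.pc β (v, T.next v) = G.c (v, T.next v) + β * H.dist (T.next v) :=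
          pc_withCost_of_eq_zero (T.toll_of_notMem hvS)
      _ ≤ G.dist v - G.dist (T.exit v) + β * H.dist v := by
          gcongr
          · linarith [T.add_dist_next v hvt]
          · exact T.dist_withCost_next_le hG hac hM hvS hvt
      _ ≤ β * (2 * r) := hv.resolve_left hvS

theorem OnTrack.of_edge (hG : G.IsCoaccessible) (hac : G.IsAcyclic)
    (hM : 2 * G.dist v < M) (hfrugal : G.IsFrugal β r S σ) (hβ : 0 ≤ β)
    (hβM : β * (2 * r) < M) (hvt : v ≠ G.t)
    (hv : T.OnTrack (G.withCost _ hct) β (2 * r) v)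
    (hpc : (G.withCost _ hct).pc β (v, w) ≤ β * (2 * r)) :
    T.OnTrack (G.withCost _ hct) β (2 * r) w := by
  set H := G.withCost _ hct
  by_cases hσ : v ∈ S ∧ w = σ v
  · exact .inl (hσ.2 ▸ (hfrugal.2 v hσ.1 hvt).1)
  obtain rfl : w = T.next v := by
    by_contra hne
    exact (hβM.trans_le (T.le_pc_withCost_of_ne hβ (fun hvS => (hσ ⟨hvS, ·⟩)) hne)).not_ge hpc
  right
  by_cases hvS : v ∈ S
  · have hpaid : G.c (v, T.next v) + (G.c (v, T.next v) +
        (G.dist (T.next v) - G.dist (T.exit (T.next v)))) + β * H.dist (T.next v)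
          ≤ β * (2 * r) := by
      rwa [← T.toll_next_of_mem hvS (hσ ⟨hvS, ·⟩)]
    linarith [G.c_nonneg (v, T.next v)]
  · calc G.dist (T.next v) - G.dist (T.exit (T.next v)) + β * H.dist (T.next v)
        ≤ G.dist v - G.dist (T.exit v) + β * H.dist v := by
          rw [T.exit_of_notMem v hvS hvt]
          gcongr
          · exact T.dist_next_le hvt
          · exact T.dist_withCost_next_le hG hac hM hvS hvt
      _ ≤ β * (2 * r) := hv.resolve_left hvS

variable (T) in
theorem motivating_withCost (hG : G.IsCoaccessible) (hac : G.IsAcyclic)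
    (hM : ∀ v, 2 * G.dist v < M) (hfrugal : G.IsFrugal β r S σ) (hβ : 0 ≤ β)
    (hβM : β * (2 * r) < M) : (G.withCost _ hct).Motivating β (2 * r) := by
  set H := G.withCost _ hct
  have hstep : ∀ v, T.OnTrack H β (2 * r) v → v ≠ G.t →
      ∃ w, H.Step β v w ∧ H.pc β (v, w) ≤ β * (2 * r) := by
    intro v hv hvt
    obtain ⟨u, hu, hpc⟩ := hv.exists_edge hG hac (hM v) hfrugal hβ hvt
    obtain ⟨w, hw, hmin⟩ := exists_edge_forall_le (fun w => H.pc β (v, w)) hu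
    exact ⟨w, ⟨hw, hmin⟩, (hmin u hu).trans hpc⟩
  have htrack : ∀ v, H.Reachable β v → T.OnTrack H β (2 * r) v := by
    intro v hv
    induction hv with
    | refl => exact .inl hfrugal.1
    | @tail v w _ hvw ih =>
      have hvt : v ≠ G.t := by
        rintro rfl
        exact hG.target_edge_notMem hac w hvw.1
      obtain ⟨u, hu, hpc⟩ := hstep v ih hvt
      exact ih.of_edge hG hac (hM v) hfrugal hβ hβM hvt ((hvw.2 u hu.1).trans hpc)
  exact fun v hv => hstep v (htrack v hv)

end ReturnTree

end Detours

section Rewards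

variable {B : Set ℝ} {b r : ℝ}

/-- The rewards for which some cost configuration is motivating for every `β ∈ B`, so that
`r(G,B)` is their infimum. -/
def rewards (G : TaskGraph n) (B : Set ℝ) : Set ℝ :=
  {r | ∃ (ct : Fin n × Fin n → ℝ) (h : ∀ e, 0 ≤ ct e),
    ∀ β ∈ B, (G.withCost ct h).Motivating β r}

theorem rewards_anti (G : TaskGraph n) : Antitone G.rewards :=
  fun _ _ hB _ ⟨ct, hct, h⟩ => ⟨ct, hct, fun β hβ => h β (hB hβ)⟩

theorem bddBelow_rewards (hst : G.s ≠ G.t) {β : ℝ} (hβB : β ∈ B) (hβ : 0 < β) :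
    BddBelow (G.rewards B) := by
  refine ⟨0, fun r ⟨ct, hct, h⟩ => ?_⟩
  obtain ⟨w, -, hpc⟩ := h β hβB G.s .refl hst
  refine nonneg_of_mul_nonneg_right (le_trans ?_ hpc) hβ
  exact add_nonneg ((G.withCost ct hct).c_nonneg _) (mul_nonneg hβ.le (dist_nonneg _ _))

theorem IsCoaccessible.rewardInf_of_source_eq_target (hG : G.IsCoaccessible) (hac : G.IsAcyclic)
    (hst : G.s = G.t) (B : Set ℝ) : G.rewardInf B = 0 := by
  -- Every real is a motivating reward, so `rewardInf` takes the junk value `sInf univ = 0`.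
  suffices h : G.rewards B = Set.univ from (congrArg sInf h).trans Real.sInf_univ
  refine Set.eq_univ_of_forall fun r =>
    ⟨0, fun _ => le_rfl, fun β _ v hv hvt => absurd ?_ hvt⟩
  obtain rfl | ⟨w, hstep, -⟩ := hv.cases_head
  · exact hst
  · exact absurd (hst ▸ hstep.1) (hG.target_edge_notMem hac w)

theorem IsCoaccessible.two_mul_mem_rewards (hG : G.IsCoaccessible) (hac : G.IsAcyclic)
    (hpos : ∀ β ∈ B, 0 < β) (hbdd : BddAbove B) {S : Set (Fin n)} {σ : Fin n → Fin n}
    (hfrugal : ∀ β ∈ B, G.IsFrugal β r S σ) : 2 * r ∈ G.rewards B := by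
  obtain ⟨T⟩ := hG.nonempty_returnTree hac S
  obtain ⟨K, hK⟩ := hbdd
  obtain ⟨L, hL⟩ := (Set.finite_range G.dist).bddAbove
  have hL (v : Fin n) : G.dist v ≤ L := hL (Set.mem_range_self v)
  have hKL : ∀ β ∈ B, β * (2 * r) ≤ max (K * |2 * r|) (2 * L) := fun β hβ =>
    calc β * (2 * r) ≤ β * |2 * r| := by gcongr; exacts [(hpos β hβ).le, le_abs_self _]
      _ ≤ K * |2 * r| := by gcongr; exact hK hβ
      _ ≤ _ := le_max_left _ _
  set M := max (K * |2 * r|) (2 * L) + 1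
  have hM (v : Fin n) : 2 * G.dist v < M := by
    linarith [hL v, le_max_right (K * |2 * r|) (2 * L)]
  have hM₀ : 0 ≤ M := by linarith [hM G.s, G.dist_nonneg G.s]
  exact ⟨T.toll σ M, T.toll_nonneg hac σ hM₀, fun β hβ =>
    T.motivating_withCost hG hac hM (hfrugal β hβ) (hpos β hβ).le
      (lt_of_le_of_lt (hKL β hβ) (lt_add_one _))⟩

theorem IsCoaccessible.nonempty_rewards (hG : G.IsCoaccessible) (hac : G.IsAcyclic)
    (hb : 0 < b) (hlb : b ∈ lowerBounds B) (hbdd : BddAbove B) : (G.rewards B).Nonempty := by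
  obtain ⟨r, S, σ, hfrugal⟩ := hG.exists_isFrugal hb
  exact ⟨2 * r, hG.two_mul_mem_rewards hac (fun β hβ => hb.trans_le (hlb hβ)) hbdd
    fun β hβ => hfrugal.mono_bias hb (hlb hβ)⟩

theorem IsCoaccessible.bddAbove_rewardInf_singleton (hG : G.IsCoaccessible) (hac : G.IsAcyclic)
    (hb : 0 < b) (hlb : b ∈ lowerBounds B) (hbdd : BddAbove B) :
    BddAbove ((fun β => G.rewardInf {β}) '' B) := by
  refine ⟨G.rewardInf B, Set.forall_mem_image.2 fun β hβ => ?_⟩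
  by_cases hst : G.s = G.t
  · simp only [hG.rewardInf_of_source_eq_target hac hst, le_rfl]
  · exact csInf_le_csInf (bddBelow_rewards hst rfl (hb.trans_le (hlb hβ)))
      (hG.nonempty_rewards hac hb hlb hbdd)
      (G.rewards_anti (Set.singleton_subset_iff.2 hβ))

theorem IsCoaccessible.exists_isFrugal_of_rewardInf_lt (hG : G.IsCoaccessible) (hac : G.IsAcyclic)
    {β : ℝ} (hβ : 0 < β) (hr : G.rewardInf {β} < r) : ∃ S σ, G.IsFrugal β r S σ := by
  have hne : (G.rewards {β}).Nonempty :=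
    hG.nonempty_rewards hac hβ (fun _ h => (Set.mem_singleton_iff.1 h).ge) bddAbove_singleton
  obtain ⟨r', ⟨ct, hct, hmot⟩, hr'⟩ := exists_lt_of_csInf_lt hne hr
  obtain ⟨S, σ, h⟩ := hG.exists_isFrugal_of_motivating hβ.le (hmot β rfl)
  exact ⟨S, σ, h.mono_reward hβ.le hr'.le⟩

end Rewards

end TaskGraph

open TaskGraph in
theorem price_of_uncertainty_le_two_general {n : ℕ} {G : TaskGraph n} (hG : G.IsCoaccessible)
    (hac : G.IsAcyclic) {B : Set ℝ} (hne : B.Nonempty) (hpos : ∀ β ∈ B, 0 < β)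
    (hbdd : BddAbove B) {R : ℝ} (hR : ∀ β ∈ B, G.rewardInf {β} ≤ R) :
    G.rewardInf B ≤ 2 * R := by
  have : Nonempty B := hne.to_subtype
  obtain ⟨β₀, hβ₀⟩ := hne
  by_cases hst : G.s = G.t
  · have := hR β₀ hβ₀
    rw [hG.rewardInf_of_source_eq_target hac hst] at this ⊢
    positivity
  suffices ∀ r > R, G.rewardInf B / 2 ≤ r by
    linarith [le_of_forall_gt_imp_ge_of_dense this]
  intro r hr
  obtain ⟨⟨S, σ⟩, hfrugal⟩ : ∃ a : Set (Fin n) × (Fin n → Fin n),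
      ∀ β : B, G.IsFrugal β r a.1 a.2 := by
    refine exists_forall_of_monotone (fun _ β β' hle h => h.mono_bias (hpos β β.2) hle) ?_
    intro ⟨β, hβ⟩
    obtain ⟨S, σ, h⟩ :=
      hG.exists_isFrugal_of_rewardInf_lt hac (hpos β hβ) ((hR β hβ).trans_lt hr)
    exact ⟨(S, σ), h⟩
  have hmem := hG.two_mul_mem_rewards hac hpos hbdd fun β hβ => hfrugal ⟨β, hβ⟩
  have : G.rewardInf B ≤ 2 * r := csInf_le (bddBelow_rewards hst hβ₀ (hpos β₀ hβ₀)) hmem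
  linarith

open TaskGraph in
/-- The price of uncertainty is at most `2`: for every task graph `G` (a finite DAG in
which every node lies on some `s`–`t` path) and every present bias set `B ⊆ (0,1]`
possessing a minimum, the infimal reward `r(G,B)` admitting a cost configuration
motivating for all `β ∈ B` is at most twice the supremum over `β ∈ B` of the infimal
reward `r(G,{β})` for the fixed bias `β`. -/
theorem price_of_uncertainty_le_two {n : ℕ} (G : TaskGraph n)
    (hdag : ∃ rank : Fin n → ℕ, ∀ e ∈ G.E, rank e.1 < rank e.2)
    (hconn : ∀ v : Fin n, ∃ P : List (Fin n),
      G.IsPath P ∧ P.head? = some G.s ∧ v ∈ P)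
    (B : Set ℝ) (hB : B ⊆ Set.Ioc 0 1) (hne : B.Nonempty)
    (b : ℝ) (hb : IsLeast B b) :
    G.rewardInf B ≤ 2 * sSup ((fun β => G.rewardInf {β}) '' B) := by
  have hG : G.IsCoaccessible := fun v =>
    have ⟨_, hP, _, hv⟩ := hconn v
    hP.exists_isPath_of_mem hv
  have hac : G.IsAcyclic := hdag.elim fun _ hrank => isAcyclic_of_rank hrank
  have hbdd : BddAbove B := bddAbove_Ioc.mono hB
  have hsup : BddAbove ((fun β => G.rewardInf {β}) '' B) :=
    hG.bddAbove_rewardInf_singleton hac (hB hb.1).1 hb.2 hbdd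
  exact price_of_uncertainty_le_two_general hG hac hne (fun β hβ => (hB hβ).1) hbdd
    fun β hβ => le_csSup hsup (Set.mem_image_of_mem _ hβ)
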